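/- Let p be a prime integer, k ≥ 0 an integer, and let Λ be a finite subgroup of (ℝ/ℤ)^{d+1} which is non-pyramidal and has δ-polynomial 1 + t^{k+1} + t^{2(k+1)} + ⋯ + t^{(p²−1)(k+1)}. Then one of the following holds: (1) d = p²(k+1) − 1 and Λ is the cyclic subgroup generated by (1/p², …, 1/p²); (2) d = (p² + p − 1)(k+1) − 1 and there is a permutation of the coordinates after which Λ is the cyclic subgroup generated by the element whose first (p²−1)(k+1) coordinates all equal 1/p and whose last p(k+1) coordinates all equal 1/p²; (3) d = p(p+1)(k+1) − 1 and there is a permutation of the coordinates after which Λ is generated by the two elements x₁ and x₂, where x₁ has its first p(k+1) coordinates equal to 1/p and its remaining p²(k+1) coordinates equal to 0, and x₂ has its first p(k+1) coordinates equal to 0 and its remaining p²(k+1) coordinates equal to 1/p. -/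

import Mathlib

open scoped BigOperators

local instance : Fact ((0:ℝ) < 1) := ⟨one_pos⟩

noncomputable def fracR (x : AddCircle (1:ℝ)) : ℝ :=
  ((AddCircle.equivIco 1 0) x : ℝ)

noncomputable def ht {ι : Type*} [Fintype ι] (x : ι → AddCircle (1:ℝ)) : ℝ :=
  ∑ i, fracR (x i)

/-- `Λ` has δ-polynomial `1 + t^step + t^(2*step) + ⋯ + t^((v-1)*step)` :
the height map is a bijection from `Λ` onto `{j*step : 0 ≤ j ≤ v-1}`. -/
def HasDeltaPoly {ι : Type*} [Fintype ι] (v step : ℕ)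
    (Λ : Set (ι → AddCircle (1:ℝ))) : Prop :=
  Set.BijOn ht Λ {y : ℝ | ∃ j : ℕ, j < v ∧ y = (j : ℝ) * (step : ℝ)}

def NonPyramidal {ι : Type*} [Fintype ι] (Λ : Set (ι → AddCircle (1:ℝ))) : Prop :=
  ∀ i : ι, ∃ x ∈ Λ, x i ≠ 0

lemma coe_fracR (x : AddCircle (1:ℝ)) : ((fracR x : ℝ) : AddCircle (1:ℝ)) = x :=
  AddCircle.coe_equivIco

lemma fracR_coe (r : ℝ) : fracR (r : AddCircle (1:ℝ)) = Int.fract r := by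
  simp [fracR, AddCircle.coe_equivIco_mk_apply]

lemma fracR_nonneg (x : AddCircle (1:ℝ)) : 0 ≤ fracR x := by
  rw [← coe_fracR x, fracR_coe]; exact Int.fract_nonneg _

lemma fracR_lt_one (x : AddCircle (1:ℝ)) : fracR x < 1 := by
  rw [← coe_fracR x, fracR_coe]; exact Int.fract_lt_one _

@[simp] lemma fracR_zero : fracR 0 = 0 := by
  simpa using fracR_coe 0

lemma fracR_coe_of_mem {r : ℝ} (h0 : 0 ≤ r) (h1 : r < 1) : fracR (r : AddCircle (1:ℝ)) = r := by
  rw [fracR_coe, Int.fract_eq_self.2 ⟨h0, h1⟩]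

lemma fracR_add_le (x y : AddCircle (1:ℝ)) : fracR (x + y) ≤ fracR x + fracR y := by
  rw [← coe_fracR x, ← coe_fracR y, ← AddCircle.coe_add]
  simp only [fracR_coe]
  exact Int.fract_add_le _ _

lemma fracR_nsmul_le (n : ℕ) (x : AddCircle (1:ℝ)) : fracR (n • x) ≤ n * fracR x := by
  induction n with
  | zero => simp
  | succ n ih =>
    rw [succ_nsmul]
    push_cast
    linarith [fracR_add_le (n • x) x]

lemma exists_fracR_mul_eq {n : ℕ} {x : AddCircle (1:ℝ)} (h : n • x = 0) :
    ∃ m : ℕ, n * fracR x = m := by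
  rw [← coe_fracR x, ← AddCircle.coe_nsmul, AddCircle.coe_eq_zero_iff] at h
  obtain ⟨m, hm⟩ := h
  simp only [nsmul_eq_mul, zsmul_eq_mul, mul_one] at hm
  have hm0 : 0 ≤ m := by
    have : (0:ℝ) ≤ m := hm ▸ mul_nonneg n.cast_nonneg (fracR_nonneg x)
    exact_mod_cast this
  lift m to ℕ using hm0
  exact ⟨m, by simpa using hm.symm⟩

lemma eq_zero_or_eq_of_mul_fracR_lt_two {n : ℕ} (hn : 0 < n) {x : AddCircle (1:ℝ)} (h : n • x = 0)
    (hc : n * fracR x < 2) : x = 0 ∨ x = ((1 / (n:ℝ) : ℝ) : AddCircle (1:ℝ)) := by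
  obtain ⟨m, hm⟩ := exists_fracR_mul_eq h
  have hm2 : m < 2 := by
    rw [hm] at hc
    exact_mod_cast hc
  interval_cases m
  · left
    have : fracR x = 0 := by
      have : (n:ℝ) ≠ 0 := by positivity
      simpa [this] using hm
    rw [← coe_fracR x, this, AddCircle.coe_zero]
  · right
    have : fracR x = 1 / (n:ℝ) := by
      rw [eq_div_iff (by positivity)]; simpa [mul_comm] using hm
    rw [← this, coe_fracR]

lemma AddSubgroup.mem_of_nsmul_mem_of_coprime {G : Type*} [AddCommGroup G] {H : AddSubgroup G}
    {m n : ℕ} (h : m.Coprime n) {y : G} (hm : m • y ∈ H) (hn : n • y ∈ H) : y ∈ H := by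
  have hb := Nat.gcd_eq_gcd_ab m n
  rw [h.gcd_eq_one] at hb
  have : y = m.gcdA n • (m • y) + m.gcdB n • (n • y) := by
    rw [← natCast_zsmul, ← natCast_zsmul, ← mul_zsmul', ← mul_zsmul', ← add_zsmul]
    rw [← hb, Nat.cast_one, one_zsmul]
  rw [this]
  exact H.add_mem (H.zsmul_mem hm _) (H.zsmul_mem hn _)

lemma AddSubgroup.mem_of_nsmul_mem_of_lt_prime {G : Type*} [AddCommGroup G] {H : AddSubgroup G}
    {p n : ℕ} (hp : p.Prime) {y : G} (hy : p ^ 2 • y = 0) (hn0 : n ≠ 0) (hn : n < p)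
    (h : n • y ∈ H) : y ∈ H :=
  AddSubgroup.mem_of_nsmul_mem_of_coprime
    (((Nat.coprime_of_lt_prime hn0 hn hp).symm).pow_right 2) h (hy ▸ H.zero_mem)

/-- If `x` has order `p`, `y` is killed by `p ^ 2` and is no multiple of `x`, then the base-`p`
combinations of `x` and `y` are distinct. -/
lemma injOn_mod_nsmul_add_div_nsmul {G : Type*} [AddCommGroup G] {p : ℕ} (hp : p.Prime) {x y : G}
    (hx : addOrderOf x = p) (hy : p ^ 2 • y = 0) (hxy : y ∉ AddSubgroup.zmultiples x) :
    Set.InjOn (fun n : ℕ => (n % p) • x + (n / p) • y) (Set.Iio (p ^ 2)) := by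
  have hdiv : ∀ m n : ℕ, n < p ^ 2 →
      (m % p) • x + (m / p) • y = (n % p) • x + (n / p) • y → n / p ≤ m / p := by
    intro m n hn h
    by_contra! hlt
    have hnp : n / p < p := Nat.div_lt_of_lt_mul (by rwa [← sq])
    refine hxy (AddSubgroup.mem_of_nsmul_mem_of_lt_prime hp hy
      (Nat.sub_ne_zero_of_lt hlt) ((Nat.sub_le _ _).trans_lt hnp) ?_)
    have : (n / p - m / p) • y = (m % p) • x - (n % p) • x := by
      rw [sub_nsmul _ hlt.le, ← sub_eq_add_neg, sub_eq_sub_iff_add_eq_add, add_comm, ← h]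
    rw [this]
    exact sub_mem (nsmul_mem (AddSubgroup.mem_zmultiples x) _)
      (nsmul_mem (AddSubgroup.mem_zmultiples x) _)
  intro m hm n hn h
  have hd : m / p = n / p := le_antisymm (hdiv n m hm h.symm) (hdiv m n hn h)
  simp only [hd, add_left_inj] at h
  have hmod : m % p = n % p := nsmul_injOn_Iio_addOrderOf
    (by rw [hx]; exact Nat.mod_lt _ hp.pos) (by rw [hx]; exact Nat.mod_lt _ hp.pos) h
  rw [← Nat.div_add_mod m p, ← Nat.div_add_mod n p, hd, hmod]

lemma exists_perm_lt_iff {n m : ℕ} (hm : m ≤ n) (S : Fin n → Prop) [DecidablePred S]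
    (hS : Fintype.card {i // S i} = m) : ∃ σ : Equiv.Perm (Fin n), ∀ i, (σ i : ℕ) < m ↔ S i := by
  have hc : Fintype.card {i : Fin n // (i : ℕ) < m} = m := by
    rw [Fintype.card_subtype, Fin.card_filter_val_lt, min_eq_right hm]
  let e : {i // S i} ≃ {i : Fin n // (i : ℕ) < m} := Fintype.equivOfCardEq (hS.trans hc.symm)
  refine ⟨e.extendSubtype, fun i => ⟨fun h => ?_, fun h => e.extendSubtype_mem i h⟩⟩
  by_contra hi
  exact e.extendSubtype_not_mem i hi h

section Height

variable {ι : Type*} [Fintype ι]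

@[simp] lemma ht_zero : ht (0 : ι → AddCircle (1:ℝ)) = 0 := by
  simp [ht]

lemma ht_nsmul_add_nsmul_le (a b : ℕ) (x y : ι → AddCircle (1:ℝ)) :
    ht (a • x + b • y) ≤ a * ht x + b * ht y := by
  simp only [ht, Finset.mul_sum, ← Finset.sum_add_distrib]
  refine Finset.sum_le_sum fun i _ => ?_
  have := fracR_add_le (a • x i) (b • y i)
  simp only [Pi.add_apply, Pi.smul_apply]
  linarith [fracR_nsmul_le a (x i), fracR_nsmul_le b (y i)]

lemma no_carry_of_ht_eq {a b : ℕ} {x y : ι → AddCircle (1:ℝ)}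
    (h : ht (a • x + b • y) = a * ht x + b * ht y) (i : ι) :
    a * fracR (x i) + b * fracR (y i) < 1 := by
  simp only [ht, Finset.mul_sum, ← Finset.sum_add_distrib] at h
  have hle : ∀ i ∈ Finset.univ,
      fracR ((a • x + b • y) i) ≤ a * fracR (x i) + b * fracR (y i) := fun i _ => by
    have := fracR_add_le (a • x i) (b • y i)
    simp only [Pi.add_apply, Pi.smul_apply]
    linarith [fracR_nsmul_le a (x i), fracR_nsmul_le b (y i)]
  rw [← (Finset.sum_eq_sum_iff_of_le hle).1 h i (Finset.mem_univ i)]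
  exact fracR_lt_one _

lemma ht_ite (S : ι → Prop) [DecidablePred S] {r s : ℝ} (hr : 0 ≤ r) (hr1 : r < 1)
    (hs : 0 ≤ s) (hs1 : s < 1) :
    ht (fun i => if S i then (r : AddCircle (1:ℝ)) else (s : AddCircle (1:ℝ))) =
      Fintype.card {i // S i} * r + Fintype.card {i // ¬ S i} * s := by
  have : ∀ i, fracR (if S i then (r : AddCircle (1:ℝ)) else (s : AddCircle (1:ℝ))) =
      if S i then r else s := fun i => by
    split_ifs
    · exact fracR_coe_of_mem hr hr1
    · exact fracR_coe_of_mem hs hs1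
  simp only [ht, this, Finset.sum_ite, Finset.sum_const, nsmul_eq_mul, Fintype.card_subtype]

namespace HasDeltaPoly

variable {v k : ℕ} {Λ : AddSubgroup (ι → AddCircle (1:ℝ))}

section General

variable (hΛ : HasDeltaPoly v (k + 1) (Λ : Set (ι → AddCircle (1:ℝ))))
include hΛ

lemma exists_ht_eq {j : ℕ} (hj : j < v) : ∃ x ∈ Λ, ht x = j * ((k:ℝ) + 1) := by
  obtain ⟨x, hx, h⟩ := hΛ.surjOn ⟨j, hj, rfl⟩
  exact ⟨x, hx, by simpa using h⟩

lemma ht_eq {x : ι → AddCircle (1:ℝ)} (hx : x ∈ Λ) : ∃ j < v, ht x = j * ((k:ℝ) + 1) := by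
  obtain ⟨j, hj, h⟩ := hΛ.mapsTo hx
  exact ⟨j, hj, by simpa using h⟩

lemma natCard_eq : Nat.card Λ = v := by
  have hset : {y : ℝ | ∃ j : ℕ, j < v ∧ y = (j : ℝ) * ((k + 1 : ℕ) : ℝ)} =
      (fun j : ℕ => (j : ℝ) * ((k + 1 : ℕ) : ℝ)) '' (Finset.range v : Set ℕ) := by
    ext y; simp [eq_comm]
  have hinj : Function.Injective (fun j : ℕ => (j : ℝ) * ((k + 1 : ℕ) : ℝ)) := fun a b h => by
    simpa [Nat.cast_add_one_ne_zero] using h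
  have h := hΛ.injOn.ncard_image
  rw [hΛ.image_eq, hset, Set.ncard_image_of_injective _ hinj, Set.ncard_coe_finset,
    Finset.card_range] at h
  rw [h]; rfl

lemma nsmul_eq_zero {x : ι → AddCircle (1:ℝ)} (hx : x ∈ Λ) : v • x = 0 := by
  have := card_nsmul_eq_zero' (x := (⟨x, hx⟩ : Λ))
  rw [hΛ.natCard_eq] at this
  simpa using congrArg Subtype.val this

/-- Distinct elements whose heights are bounded by `0, k + 1, 2 (k + 1), …` attain these bounds. -/
lemma ht_eq_of_le {N : ℕ} {g : ℕ → ι → AddCircle (1:ℝ)} (hg : ∀ n, g n ∈ Λ)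
    (hinj : Set.InjOn g (Set.Iio N)) (hle : ∀ n, ht (g n) ≤ n * ((k:ℝ) + 1)) :
    ∀ n < N, ht (g n) = n * ((k:ℝ) + 1) := by
  intro n
  induction n using Nat.strong_induction_on with
  | _ n ih =>
    intro hn
    obtain ⟨j, -, hj⟩ := hΛ.ht_eq (hg n)
    have hjn : j ≤ n := by
      have h := hle n
      rw [hj] at h
      exact_mod_cast le_of_mul_le_mul_right h (by positivity)
    rcases hjn.lt_or_eq with hlt | rfl
    · have h := hΛ.injOn (hg j) (hg n) ((ih j hlt (hlt.trans hn)).trans hj.symm)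
      exact absurd (hinj (hlt.trans hn) hn h) hlt.ne
    · exact hj

lemma exists_eq_of_ht_eq {g : ℕ → ι → AddCircle (1:ℝ)} (hg : ∀ n, g n ∈ Λ)
    (hht : ∀ n < v, ht (g n) = n * ((k:ℝ) + 1)) {x : ι → AddCircle (1:ℝ)} (hx : x ∈ Λ) :
    ∃ n < v, x = g n := by
  obtain ⟨j, hjv, hj⟩ := hΛ.ht_eq hx
  exact ⟨j, hjv, hΛ.injOn hx (hg j) (hj.trans (hht j hjv).symm)⟩

lemma ht_nsmul_of_lt_addOrderOf {x : ι → AddCircle (1:ℝ)} (hx : x ∈ Λ) (hht : ht x = (k:ℝ) + 1) :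
    ∀ n < addOrderOf x, ht (n • x) = n * ((k:ℝ) + 1) :=
  hΛ.ht_eq_of_le (fun n => Λ.nsmul_mem hx n) nsmul_injOn_Iio_addOrderOf fun n => by
    simpa [hht] using ht_nsmul_add_nsmul_le n 0 x 0

/-- An element of minimal positive height has all coordinates `0` or the inverse of its order. -/
lemma apply_eq_of_ht_eq {x : ι → AddCircle (1:ℝ)} (hx : x ∈ Λ) (hht : ht x = (k:ℝ) + 1)
    (ho : 2 ≤ addOrderOf x) (i : ι) :
    x i = 0 ∨ x i = ((1 / (addOrderOf x : ℝ) : ℝ) : AddCircle (1:ℝ)) := by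
  refine eq_zero_or_eq_of_mul_fracR_lt_two (by omega)
    (congrFun (addOrderOf_nsmul_eq_zero x) i) ?_
  have h := hΛ.ht_nsmul_of_lt_addOrderOf hx hht (addOrderOf x - 1) (by omega)
  have := no_carry_of_ht_eq (a := addOrderOf x - 1) (b := 0) (x := x) (y := 0)
    (by simpa [hht] using h) i
  rw [Nat.cast_sub (by omega)] at this
  simp only [Nat.cast_one, Nat.cast_zero, zero_mul, add_zero] at this
  linarith [fracR_lt_one (x i)]

end General

/-- If an element of minimal positive height has order `p`, then together with an element of height
`p (k + 1)` it generates, and sums of up to `p - 1` copies of each have no carries. -/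
lemma two_generators {p : ℕ} (hp : p.Prime)
    (hΛ : HasDeltaPoly (p ^ 2) (k + 1) (Λ : Set (ι → AddCircle (1:ℝ))))
    {x y : ι → AddCircle (1:ℝ)} (hx : x ∈ Λ) (hxo : addOrderOf x = p) (hhtx : ht x = (k:ℝ) + 1)
    (hy : y ∈ Λ) (hhty : ht y = p * ((k:ℝ) + 1)) :
    (∀ z ∈ Λ, ∃ a b : ℕ, a < p ∧ b < p ∧ z = a • x + b • y) ∧
      y ∉ AddSubgroup.zmultiples x ∧
      ∀ i, ((p:ℝ) - 1) * fracR (x i) + ((p:ℝ) - 1) * fracR (y i) < 1 := by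
  have hk : (0:ℝ) < (k:ℝ) + 1 := by positivity
  have hxy : y ∉ AddSubgroup.zmultiples x := by
    intro h
    obtain ⟨n, rfl⟩ := AddSubgroup.mem_zmultiples_iff.1 h
    have hn0 : 0 ≤ n % (p:ℤ) := Int.emod_nonneg _ (by exact_mod_cast hp.ne_zero)
    have hnp : n % (p:ℤ) < p := Int.emod_lt_of_pos _ (by exact_mod_cast hp.pos)
    have hmod := mod_addOrderOf_zsmul x n
    rw [hxo] at hmod
    rw [← hmod] at hhty
    lift n % (p:ℤ) to ℕ using hn0 with c
    have hc : c < p := by exact_mod_cast hnp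
    rw [natCast_zsmul, hΛ.ht_nsmul_of_lt_addOrderOf hx hhtx c (hxo ▸ hc)] at hhty
    have := mul_right_cancel₀ hk.ne' hhty
    exact hc.ne (by exact_mod_cast this)
  have hmem : ∀ n : ℕ, (n % p) • x + (n / p) • y ∈ Λ := fun n =>
    Λ.add_mem (Λ.nsmul_mem hx _) (Λ.nsmul_mem hy _)
  have hht := hΛ.ht_eq_of_le hmem
    (injOn_mod_nsmul_add_div_nsmul hp hxo (hΛ.nsmul_eq_zero hy) hxy) fun n => by
      refine (ht_nsmul_add_nsmul_le _ _ x y).trans_eq ?_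
      have : ((n % p : ℕ) : ℝ) + p * ((n / p : ℕ) : ℝ) = n := by exact_mod_cast Nat.mod_add_div n p
      rw [hhtx, hhty]
      linear_combination ((k:ℝ) + 1) * this
  refine ⟨fun z hz => ?_, hxy, fun i => ?_⟩
  · obtain ⟨n, hn, rfl⟩ := hΛ.exists_eq_of_ht_eq hmem hht hz
    exact ⟨n % p, n / p, Nat.mod_lt _ hp.pos, Nat.div_lt_of_lt_mul (by rwa [← sq]), rfl⟩
  · obtain ⟨q, rfl⟩ : ∃ q, p = q + 1 := ⟨p - 1, by have := hp.pos; omega⟩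
    have h := hht (q + (q + 1) * q) (by nlinarith)
    rw [Nat.add_mul_mod_self_left, Nat.add_mul_div_left _ _ hp.pos, Nat.mod_eq_of_lt q.lt_succ_self,
      Nat.div_eq_of_lt q.lt_succ_self, zero_add] at h
    have := no_carry_of_ht_eq (a := q) (b := q) (x := x) (y := y)
      (by rw [h, hhtx, hhty]; push_cast; ring) i
    simpa using this

/-- The coordinates of the second generator, in terms of those of the first. -/
lemma generators_eq {p : ℕ} (hp : p.Prime)
    (hΛ : HasDeltaPoly (p ^ 2) (k + 1) (Λ : Set (ι → AddCircle (1:ℝ))))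
    (hnp : NonPyramidal (Λ : Set (ι → AddCircle (1:ℝ))))
    {x y : ι → AddCircle (1:ℝ)} (hx : x ∈ Λ) (hxo : addOrderOf x = p) (hhtx : ht x = (k:ℝ) + 1)
    (hy : y ∈ Λ) (hhty : ht y = p * ((k:ℝ) + 1)) :
    (∀ i, x i = 0 → y i = ((1 / (p:ℝ) : ℝ) : AddCircle (1:ℝ))) ∧
      ((∀ i, x i ≠ 0 → y i = 0) ∨
        ∀ i, x i ≠ 0 → y i = ((1 / (p:ℝ) ^ 2 : ℝ) : AddCircle (1:ℝ))) := by
  obtain ⟨hgen, hxy, hcarry⟩ := hΛ.two_generators hp hx hxo hhtx hy hhty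
  have hp2 : (2:ℝ) ≤ p := by exact_mod_cast hp.two_le
  obtain ⟨c, b, hc, hb, hcb⟩ := hgen (p • y) (Λ.nsmul_mem hy p)
  obtain rfl : b = 0 := by
    by_contra hb0
    refine hxy (AddSubgroup.mem_of_nsmul_mem_of_lt_prime hp (hΛ.nsmul_eq_zero hy)
      (n := p - b) (by omega) (by omega) ?_)
    rw [sub_nsmul _ hb.le, hcb, add_neg_cancel_right]
    exact nsmul_mem (AddSubgroup.mem_zmultiples x) _
  rw [zero_nsmul, add_zero] at hcb
  have hpy : ∀ i, p • y i = c • x i := fun i => congrFun hcb i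
  have hyi : ∀ i, x i ≠ 0 →
      (y i = 0 ∧ c = 0) ∨ (y i = ((1 / (p:ℝ) ^ 2 : ℝ) : AddCircle (1:ℝ)) ∧ c ≠ 0) := by
    intro i hi
    have hxi := (hΛ.apply_eq_of_ht_eq hx hhtx (hxo ▸ hp.two_le) i).resolve_left hi
    rw [hxo] at hxi
    have hfx : fracR (x i) = 1 / p := by
      rw [hxi]
      exact fracR_coe_of_mem (by positivity) (by rw [div_lt_one (by positivity)]; linarith)
    have hlt : ((p ^ 2 : ℕ) : ℝ) * fracR (y i) < 2 := by
      have h := hcarry i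
      rw [hfx] at h
      have h1 : ((p:ℝ) - 1) * (p ^ 2 * fracR (y i)) < p := by
        have := mul_lt_mul_of_pos_left h (by positivity : (0:ℝ) < p ^ 2)
        field_simp at this
        nlinarith
      push_cast
      nlinarith
    have hcx : c • x i = ((c / (p:ℝ) : ℝ) : AddCircle (1:ℝ)) := by
      rw [hxi, ← AddCircle.coe_nsmul, nsmul_eq_mul, mul_one_div]
    have hfc : fracR (p • y i) = c / p := by
      rw [hpy, hcx]
      refine fracR_coe_of_mem (by positivity) ?_
      rw [div_lt_one (by positivity)]
      exact_mod_cast hc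
    rcases eq_zero_or_eq_of_mul_fracR_lt_two (pow_pos hp.pos 2)
      (congrFun (hΛ.nsmul_eq_zero hy) i) hlt with h | h
    · left
      refine ⟨h, ?_⟩
      have hp0 : (p:ℝ) ≠ 0 := by positivity
      simpa [h, hp.ne_zero, eq_comm] using hfc
    · right
      push_cast at h
      refine ⟨h, ?_⟩
      rintro rfl
      rw [h, ← AddCircle.coe_nsmul, fracR_coe_of_mem] at hfc
      · have : (p:ℝ) ≠ 0 := by positivity
        simp [this] at hfc
      · positivity
      · rw [nsmul_eq_mul, mul_one_div, div_lt_one (by positivity)]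
        nlinarith
  refine ⟨fun i hi => ?_, ?_⟩
  · have h0 : p • y i = 0 := by rw [hpy, hi, smul_zero]
    refine (eq_zero_or_eq_of_mul_fracR_lt_two hp.pos h0 ?_).resolve_left fun h => ?_
    · have := hcarry i
      rw [hi, fracR_zero, mul_zero, zero_add] at this
      linarith [fracR_lt_one (y i)]
    · obtain ⟨z, hz, hzi⟩ := hnp i
      obtain ⟨a, b, -, -, rfl⟩ := hgen z hz
      simp [hi, h] at hzi
  · by_cases hc0 : c = 0
    · exact Or.inl fun i hi => ((hyi i hi).resolve_right fun h => h.2 hc0).1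
    · exact Or.inr fun i hi => ((hyi i hi).resolve_left fun h => hc0 h.2).1

end HasDeltaPoly

end Height

theorem stmt_7 (p k d : ℕ) (hp : p.Prime)
    (Λ : AddSubgroup (Fin (d+1) → AddCircle (1:ℝ)))
    (hfin : (Λ : Set (Fin (d+1) → AddCircle (1:ℝ))).Finite)
    (hnp : NonPyramidal (Λ : Set (Fin (d+1) → AddCircle (1:ℝ))))
    (hΛ : HasDeltaPoly (p^2) (k+1) (Λ : Set (Fin (d+1) → AddCircle (1:ℝ)))) :
    (d = p^2*(k+1) - 1 ∧
      Λ = AddSubgroup.zmultiples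
        (fun _ : Fin (d+1) => ((1 / ((p:ℝ)^2) : ℝ) : AddCircle (1:ℝ)))) ∨
    (d = (p^2 + p - 1)*(k+1) - 1 ∧
      ∃ σ : Equiv.Perm (Fin (d+1)),
        Λ = AddSubgroup.zmultiples
          (fun i : Fin (d+1) =>
            if ((σ i : ℕ)) < (p^2 - 1)*(k+1)
            then ((1 / (p:ℝ) : ℝ) : AddCircle (1:ℝ))
            else ((1 / ((p:ℝ)^2) : ℝ) : AddCircle (1:ℝ)))) ∨
    (d = p*(p+1)*(k+1) - 1 ∧
      ∃ σ : Equiv.Perm (Fin (d+1)),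
        Λ = AddSubgroup.closure
          { (fun i : Fin (d+1) =>
              if ((σ i : ℕ)) < p*(k+1)
              then ((1 / (p:ℝ) : ℝ) : AddCircle (1:ℝ)) else 0),
            (fun i : Fin (d+1) =>
              if ((σ i : ℕ)) < p*(k+1)
              then 0 else ((1 / (p:ℝ) : ℝ) : AddCircle (1:ℝ))) }) := by
  have hp0 : (0:ℝ) < p := by exact_mod_cast hp.pos
  have hp2 : (2:ℝ) ≤ p := by exact_mod_cast hp.two_le
  have hpsq : p < p ^ 2 := by nlinarith [hp.two_le]
  have hinv : 1 / (p:ℝ) < 1 := by rw [div_lt_one hp0]; linarith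
  have hinv2 : 1 / (p:ℝ) ^ 2 < 1 := by rw [div_lt_one (by positivity)]; nlinarith
  obtain ⟨x, hx, hhtx⟩ := hΛ.exists_ht_eq (j := 1) (by linarith [hp.two_le])
  rw [Nat.cast_one, one_mul] at hhtx
  have hx0 : x ≠ 0 := by
    rintro rfl
    rw [ht_zero] at hhtx
    have : (0:ℝ) < (k:ℝ) + 1 := by positivity
    linarith
  obtain ⟨e, he, hxo⟩ := (Nat.dvd_prime_pow hp).1
    (addOrderOf_dvd_of_nsmul_eq_zero (hΛ.nsmul_eq_zero hx))
  interval_cases e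
  · simp [hx0] at hxo
  · right
    rw [pow_one] at hxo
    obtain ⟨y, hy, hhty⟩ := hΛ.exists_ht_eq hpsq
    have hgen := (hΛ.two_generators hp hx hxo hhtx hy hhty).1
    obtain ⟨hy0, hy1⟩ := hΛ.generators_eq hp hnp hx hxo hhtx hy hhty
    have hxi : ∀ i, x i ≠ 0 → x i = ((1 / (p:ℝ) : ℝ) : AddCircle (1:ℝ)) := fun i hi => by
      simpa [hxo, hi] using hΛ.apply_eq_of_ht_eq hx hhtx (hxo ▸ hp.two_le) i
    classical
    have hcard : Fintype.card {i // x i = 0} + Fintype.card {i // ¬ x i = 0} = d + 1 := by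
      rw [← Fintype.card_sum, Fintype.card_congr (Equiv.sumCompl fun i => x i = 0),
        Fintype.card_fin]
    have hcx : Fintype.card {i // ¬ x i = 0} = p * (k + 1) := by
      have hxe : x = fun i => if x i = 0 then ((0:ℝ) : AddCircle (1:ℝ))
          else ((1 / (p:ℝ) : ℝ) : AddCircle (1:ℝ)) := by
        funext i
        split_ifs with h
        · simpa using h
        · exact hxi i h
      rw [hxe, ht_ite _ le_rfl one_pos (by positivity) hinv] at hhtx
      field_simp at hhtx
      have h : (Fintype.card {i // ¬ x i = 0} : ℝ) = p * (k + 1) := by linarith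
      exact_mod_cast h
    rcases hy1 with hy1 | hy1
    · right
      have hye : y = fun i => if x i = 0 then ((1 / (p:ℝ) : ℝ) : AddCircle (1:ℝ))
          else ((0:ℝ) : AddCircle (1:ℝ)) := by
        funext i
        split_ifs with h
        · exact hy0 i h
        · simpa using hy1 i h
      have hcy : Fintype.card {i // x i = 0} = p ^ 2 * (k + 1) := by
        rw [hye, ht_ite _ (by positivity) hinv le_rfl one_pos] at hhty
        field_simp at hhty
        have h : (Fintype.card {i // x i = 0} : ℝ) = p ^ 2 * (k + 1) := by linarith
        exact_mod_cast h
      obtain ⟨σ, hσ⟩ := exists_perm_lt_iff (by omega) _ hcx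
      refine ⟨?_, σ, ?_⟩
      · have : p * (p + 1) * (k + 1) = d + 1 := by rw [← hcard, hcx, hcy]; ring
        omega
      · have h1 : (fun i : Fin (d + 1) => if (σ i : ℕ) < p * (k + 1)
            then ((1 / (p:ℝ) : ℝ) : AddCircle (1:ℝ)) else 0) = x := by
          funext i
          simp only [hσ]
          split_ifs with h
          · exact h.symm
          · exact (hxi i h).symm
        have h2 : (fun i : Fin (d + 1) => if (σ i : ℕ) < p * (k + 1)
            then 0 else ((1 / (p:ℝ) : ℝ) : AddCircle (1:ℝ))) = y := by
          funext i
          simp only [hσ]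
          split_ifs with h
          · exact (hy0 i h).symm
          · exact (hy1 i h).symm
        rw [h1, h2]
        refine le_antisymm (fun z hz => ?_) ?_
        · obtain ⟨a, b, -, -, rfl⟩ := hgen z hz
          exact add_mem (nsmul_mem (AddSubgroup.subset_closure (by simp)) _)
            (nsmul_mem (AddSubgroup.subset_closure (by simp)) _)
        · rw [AddSubgroup.closure_le]
          rintro z (rfl | rfl)
          exacts [hx, hy]
    · left
      have hye : y = fun i => if x i = 0 then ((1 / (p:ℝ) : ℝ) : AddCircle (1:ℝ))
          else ((1 / (p:ℝ) ^ 2 : ℝ) : AddCircle (1:ℝ)) := by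
        funext i
        split_ifs with h
        · exact hy0 i h
        · exact hy1 i h
      obtain ⟨q, hq⟩ : ∃ q, p ^ 2 = q + 1 := ⟨p ^ 2 - 1, by omega⟩
      have hcy : Fintype.card {i // x i = 0} = (p ^ 2 - 1) * (k + 1) := by
        rw [hye, ht_ite _ (by positivity) hinv (by positivity) hinv2, hcx] at hhty
        push_cast at hhty
        field_simp at hhty
        have hq' : (p:ℝ) ^ 2 = q + 1 := by exact_mod_cast hq
        have h : (Fintype.card {i // x i = 0} : ℝ) = q * (k + 1) := by
          linear_combination hhty + ((k:ℝ) + 1) * hq'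
        rw [hq, Nat.add_sub_cancel]
        exact_mod_cast h
      obtain ⟨σ, hσ⟩ := exists_perm_lt_iff (by omega) _ hcy
      refine ⟨?_, σ, ?_⟩
      · have : (p ^ 2 + p - 1) * (k + 1) = d + 1 := by
          rw [← hcard, hcx, hcy, hq, Nat.add_sub_cancel, add_right_comm, Nat.add_sub_cancel]
          ring
        omega
      · have h1 : (fun i : Fin (d + 1) => if (σ i : ℕ) < (p ^ 2 - 1) * (k + 1)
            then ((1 / (p:ℝ) : ℝ) : AddCircle (1:ℝ))
            else ((1 / (p:ℝ) ^ 2 : ℝ) : AddCircle (1:ℝ))) = y := by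
          rw [hye]
          funext i
          simp only [hσ]
        have hxy : x = p • y := by
          funext i
          by_cases h : x i = 0
          · rw [h, Pi.smul_apply, hy0 i h, ← AddCircle.coe_nsmul, nsmul_eq_mul,
              mul_one_div_cancel hp0.ne']
            exact (AddCircle.coe_period 1).symm
          · rw [hxi i h, Pi.smul_apply, hy1 i h, ← AddCircle.coe_nsmul, nsmul_eq_mul]
            congr 1
            field_simp
        rw [h1]
        refine le_antisymm (fun z hz => ?_) (by simpa using hy)
        obtain ⟨a, b, -, -, rfl⟩ := hgen z hz
        rw [hxy]
        exact add_mem (nsmul_mem (nsmul_mem (AddSubgroup.mem_zmultiples y) _) _)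
          (nsmul_mem (AddSubgroup.mem_zmultiples y) _)
  · left
    have hgen : ∀ z ∈ Λ, ∃ n < p ^ 2, z = n • x := fun z hz =>
      hΛ.exists_eq_of_ht_eq (fun n => Λ.nsmul_mem hx n)
        (hxo ▸ hΛ.ht_nsmul_of_lt_addOrderOf hx hhtx) hz
    have hxe : x = fun _ => ((1 / (p:ℝ) ^ 2 : ℝ) : AddCircle (1:ℝ)) := by
      funext i
      have h := hΛ.apply_eq_of_ht_eq hx hhtx (by rw [hxo]; linarith [hp.two_le]) i
      rw [hxo, Nat.cast_pow] at h
      refine h.resolve_left fun h0 => ?_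
      obtain ⟨z, hz, hzi⟩ := hnp i
      obtain ⟨n, -, rfl⟩ := hgen z hz
      simp [h0] at hzi
    refine ⟨?_, ?_⟩
    · rw [hxe] at hhtx
      simp only [ht, fracR_coe_of_mem (by positivity : 0 ≤ 1 / (p:ℝ) ^ 2) hinv2,
        Finset.sum_const, Finset.card_univ, Fintype.card_fin, nsmul_eq_mul] at hhtx
      field_simp at hhtx
      have : d + 1 = p ^ 2 * (k + 1) := by exact_mod_cast hhtx
      omega
    · rw [← hxe]
      refine le_antisymm (fun z hz => ?_) (by simpa using hx)
      obtain ⟨n, -, rfl⟩ := hgen z hz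
      exact nsmul_mem (AddSubgroup.mem_zmultiples x) _
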